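/- Let U ⊆ ℝⁿ be open, let g^{ij} : U → ℝ be smooth functions such that (g^{ij}(x)) is a symmetric matrix for each x, and let σ : U × U → ℝ be a smooth function satisfying the Hamilton–Jacobi equation σ(x,x') = (1/2) Σ_{i,j} g^{ij}(x) σ_{,i}(x,x') σ_{,j}(x,x') for all (x,x') ∈ U × U. Let (x,x') ∈ U × U be a point at which the matrix (σ_{,ij'}(x,x')) is invertible, with inverse (γ^{j'i}). Define V_{k'l'} := Σ_{i,j} σ_{,j'} γ^{ij'} σ_{,k'l'i} and Y_{k'l'} := σ_{,k'l'} − V_{k'l'}, all evaluated at (x,x'). Then the matrix (g^{ij}(x)) is uniquely determined by the partial derivatives of σ through the identity g^{ij}(x) = Σ_{k,l} γ^{ik'} γ^{jl'} Y_{k'l'}. -/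

import Mathlib

/-!
The Hamilton–Jacobi equation is differentiated twice in the second argument, with `x` fixed, so
that `g` is constant throughout. Write `M` for the mixed Hessian `σ_{,ij'}`. One derivative,
together with the symmetry of `g`, gives `σ_{,l'} = Σ_{ij} g^{ij} M_{il} σ_{,j}` on all of `U × U`
(`hamiltonJacobi_d2`), hence `Σ_j g^{pj} σ_{,j} = Σ_q σ_{,q'} γ^{q'p}` where `M` is invertible. A
second derivative gives `σ_{,k'l'} = Σ_{ij} g^{ij} (σ_{,k'l'i} σ_{,j} + M_{il} M_{jk})`
(`hamiltonJacobi_d2_d2`). By the first relation the terms with third derivatives are `V_{k'l'}`, so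
`Y = Mᵀ g M`, and conjugating by `γ = M⁻¹` recovers `g` (`metric_of_relations`).

The only analytic input is that partial derivatives in the two arguments preserve smoothness on
`U × U` and commute; both follow by writing them as directional derivatives of the uncurried
function.
-/

open scoped BigOperators
open Set

/-- `∂/∂x^i` in the first argument of a two-point function. -/
noncomputable def d1 (n : ℕ) (i : Fin n) (f : (Fin n → ℝ) → (Fin n → ℝ) → ℝ) :
    (Fin n → ℝ) → (Fin n → ℝ) → ℝ :=
  fun x x' => fderiv ℝ (fun y => f y x') x (Pi.single i 1)

/-- `∂/∂x'^i` in the second argument of a two-point function. -/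
noncomputable def d2 (n : ℕ) (i : Fin n) (f : (Fin n → ℝ) → (Fin n → ℝ) → ℝ) :
    (Fin n → ℝ) → (Fin n → ℝ) → ℝ :=
  fun x x' => fderiv ℝ (fun y => f x y) x' (Pi.single i 1)

/-- The matrix of mixed second derivatives `σ_{,ij'} = ∂²σ/∂x^i∂x'^j` at `(x,x')`. -/
noncomputable def mixedHess (n : ℕ) (σ : (Fin n → ℝ) → (Fin n → ℝ) → ℝ)
    (x x' : Fin n → ℝ) : Matrix (Fin n) (Fin n) ℝ :=
  Matrix.of fun i j => d1 n i (d2 n j σ) x x'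

section TwoPoint

variable {n : ℕ} {U : Set (Fin n → ℝ)} {f : (Fin n → ℝ) → (Fin n → ℝ) → ℝ}

/-- Smoothness of a two-point function on `U × U`, as a function of the pair. -/
def TwoPointSmooth {n : ℕ} (U : Set (Fin n → ℝ)) (f : (Fin n → ℝ) → (Fin n → ℝ) → ℝ) : Prop :=
  ContDiffOn ℝ (⊤ : ℕ∞) (fun p : (Fin n → ℝ) × (Fin n → ℝ) => f p.1 p.2) (U ×ˢ U)

theorem TwoPointSmooth.contDiffAt (hU : IsOpen U) (hf : TwoPointSmooth U f)
    {p : (Fin n → ℝ) × (Fin n → ℝ)} (hp : p ∈ U ×ˢ U) :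
    ContDiffAt ℝ (⊤ : ℕ∞) (fun p : (Fin n → ℝ) × (Fin n → ℝ) => f p.1 p.2) p :=
  ContDiffOn.contDiffAt hf ((hU.prod hU).mem_nhds hp)

theorem TwoPointSmooth.differentiableAt (hU : IsOpen U) (hf : TwoPointSmooth U f)
    {p : (Fin n → ℝ) × (Fin n → ℝ)} (hp : p ∈ U ×ˢ U) :
    DifferentiableAt ℝ (fun p : (Fin n → ℝ) × (Fin n → ℝ) => f p.1 p.2) p :=
  (hf.contDiffAt hU hp).differentiableAt (by simp)

theorem d1_eq_fderiv (hU : IsOpen U) (hf : TwoPointSmooth U f) (i : Fin n)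
    {p : (Fin n → ℝ) × (Fin n → ℝ)} (hp : p ∈ U ×ˢ U) :
    d1 n i f p.1 p.2 =
      fderiv ℝ (fun p : (Fin n → ℝ) × (Fin n → ℝ) => f p.1 p.2) p (Pi.single i 1, 0) := by
  have h := (hf.differentiableAt hU hp).hasFDerivAt.comp (f := fun y => (y, p.2)) p.1
    (hasFDerivAt_prodMk_left p.1 p.2)
  have h' := h.fderiv
  simp only [Function.comp_def] at h'
  simp [d1, h']

theorem d2_eq_fderiv (hU : IsOpen U) (hf : TwoPointSmooth U f) (i : Fin n)
    {p : (Fin n → ℝ) × (Fin n → ℝ)} (hp : p ∈ U ×ˢ U) :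
    d2 n i f p.1 p.2 =
      fderiv ℝ (fun p : (Fin n → ℝ) × (Fin n → ℝ) => f p.1 p.2) p (0, Pi.single i 1) := by
  have h := (hf.differentiableAt hU hp).hasFDerivAt.comp (f := fun y => (p.1, y)) p.2
    (hasFDerivAt_prodMk_right p.1 p.2)
  have h' := h.fderiv
  simp only [Function.comp_def] at h'
  simp [d2, h']

theorem TwoPointSmooth.fderiv_apply (hU : IsOpen U) (hf : TwoPointSmooth U f)
    (v : (Fin n → ℝ) × (Fin n → ℝ)) :
    ContDiffOn ℝ (⊤ : ℕ∞)
      (fun p => fderiv ℝ (fun p : (Fin n → ℝ) × (Fin n → ℝ) => f p.1 p.2) p v) (U ×ˢ U) :=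
  (ContDiffOn.fderiv_of_isOpen hf (hU.prod hU) (by simp)).clm_apply contDiffOn_const

theorem TwoPointSmooth.smooth_d1 (hU : IsOpen U) (hf : TwoPointSmooth U f) (i : Fin n) :
    TwoPointSmooth U (d1 n i f) :=
  (hf.fderiv_apply hU (Pi.single i 1, 0)).congr fun _ hp => d1_eq_fderiv hU hf i hp

theorem TwoPointSmooth.smooth_d2 (hU : IsOpen U) (hf : TwoPointSmooth U f) (i : Fin n) :
    TwoPointSmooth U (d2 n i f) :=
  (hf.fderiv_apply hU (0, Pi.single i 1)).congr fun _ hp => d2_eq_fderiv hU hf i hp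

theorem fderiv_fderiv_apply (hU : IsOpen U) (hf : TwoPointSmooth U f)
    (v w : (Fin n → ℝ) × (Fin n → ℝ)) {p : (Fin n → ℝ) × (Fin n → ℝ)} (hp : p ∈ U ×ˢ U) :
    fderiv ℝ (fun q => fderiv ℝ (fun p : (Fin n → ℝ) × (Fin n → ℝ) => f p.1 p.2) q v) p w =
      fderiv ℝ (fderiv ℝ (fun p : (Fin n → ℝ) × (Fin n → ℝ) => f p.1 p.2)) p w v := by
  have hd : DifferentiableAt ℝ
      (fderiv ℝ (fun p : (Fin n → ℝ) × (Fin n → ℝ) => f p.1 p.2)) p :=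
    ((hf.contDiffAt hU hp).fderiv_right (m := (⊤ : ℕ∞)) (by simp)).differentiableAt
      (by simp)
  rw [fderiv_clm_apply hd (differentiableAt_const v)]
  simp

theorem d1_d2_comm (hU : IsOpen U) (hf : TwoPointSmooth U f) (i j : Fin n)
    {x x' : Fin n → ℝ} (hx : x ∈ U) (hx' : x' ∈ U) :
    d2 n j (d1 n i f) x x' = d1 n i (d2 n j f) x x' := by
  have hp : (x, x') ∈ U ×ˢ U := ⟨hx, hx'⟩
  have hnhds := (hU.prod hU).mem_nhds hp
  have e1 := d2_eq_fderiv hU (hf.smooth_d1 hU i) j hp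
  have e2 := d1_eq_fderiv hU (hf.smooth_d2 hU j) i hp
  rw [Filter.EventuallyEq.fderiv_eq (Filter.eventuallyEq_of_mem hnhds
    fun _ hq => d1_eq_fderiv hU hf i hq), fderiv_fderiv_apply hU hf _ _ hp] at e1
  rw [Filter.EventuallyEq.fderiv_eq (Filter.eventuallyEq_of_mem hnhds
    fun _ hq => d2_eq_fderiv hU hf j hq), fderiv_fderiv_apply hU hf _ _ hp] at e2
  have hs : IsSymmSndFDerivAt ℝ (fun p : (Fin n → ℝ) × (Fin n → ℝ) => f p.1 p.2) (x, x') :=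
    (hf.contDiffAt hU hp).isSymmSndFDerivAt
      (by simpa using WithTop.coe_le_coe.2 (le_top (a := (2 : ℕ∞))))
  exact e1.trans ((hs _ _).trans e2.symm)

theorem TwoPointSmooth.hasFDerivAt_snd (hU : IsOpen U) (hf : TwoPointSmooth U f)
    {x x' : Fin n → ℝ} (hx : x ∈ U) (hx' : x' ∈ U) :
    HasFDerivAt (fun y => f x y) (fderiv ℝ (fun y => f x y) x') x' := by
  have hp : (x, x') ∈ U ×ˢ U := ⟨hx, hx'⟩
  exact ((hf.differentiableAt hU hp).hasFDerivAt.comp (f := fun y => (x, y)) x'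
    (hasFDerivAt_prodMk_right x x')).differentiableAt.hasFDerivAt

/-- Leibniz rule in the second argument for a bilinear expression whose coefficients depend
only on the first argument, applied to a function that equals the expression on `U`. -/
theorem d2_bilinear (hU : IsOpen U) (c : Fin n → Fin n → ℝ)
    {A B : Fin n → (Fin n → ℝ) → (Fin n → ℝ) → ℝ}
    (hA : ∀ i, TwoPointSmooth U (A i)) (hB : ∀ i, TwoPointSmooth U (B i))
    {x x' : Fin n → ℝ} (hx : x ∈ U) (hx' : x' ∈ U)
    (h : ∀ y ∈ U, f x y = ∑ i, ∑ j, c i j * A i x y * B j x y) (k : Fin n) :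
    d2 n k f x x' = ∑ i, ∑ j, c i j *
      (d2 n k (A i) x x' * B j x x' + A i x x' * d2 n k (B j) x x') := by
  have hd := HasFDerivAt.fun_sum (u := Finset.univ) fun i _ =>
    HasFDerivAt.fun_sum (u := Finset.univ) fun j _ =>
      (((hA i).hasFDerivAt_snd hU hx hx').const_mul (c i j)).mul
        ((hB j).hasFDerivAt_snd hU hx hx')
  have he := Filter.EventuallyEq.fderiv_eq (𝕜 := ℝ)
    (Filter.eventuallyEq_of_mem (hU.mem_nhds hx') h)
  unfold d2
  rw [he]
  erw [hd.fderiv]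
  simp only [sum_apply, add_apply,
    smul_apply, smul_eq_mul]
  refine Finset.sum_congr rfl fun i _ => Finset.sum_congr rfl fun j _ => ?_
  ring

end TwoPoint

/-- The first `x'`-derivative of the Hamilton–Jacobi equation. -/
theorem hamiltonJacobi_d2 {n : ℕ} {U : Set (Fin n → ℝ)} (hU : IsOpen U)
    {σ : (Fin n → ℝ) → (Fin n → ℝ) → ℝ} (hσ : TwoPointSmooth U σ)
    {x : Fin n → ℝ} (hx : x ∈ U) (c : Fin n → Fin n → ℝ) (hc : ∀ i j, c i j = c j i)
    (hHJ : ∀ y ∈ U, σ x y = (1 / 2) * ∑ i, ∑ j, c i j * d1 n i σ x y * d1 n j σ x y)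
    (l : Fin n) {x' : Fin n → ℝ} (hx' : x' ∈ U) :
    d2 n l σ x x' = ∑ i, ∑ j, c i j * d1 n i (d2 n l σ) x x' * d1 n j σ x x' := by
  have h := d2_bilinear hU (fun i j => 1 / 2 * c i j) (fun i => hσ.smooth_d1 hU i)
    (fun i => hσ.smooth_d1 hU i) hx hx'
    (fun y hy => by simpa only [Finset.mul_sum, mul_assoc] using hHJ y hy) l
  rw [h]
  simp only [d1_d2_comm hU hσ _ _ hx hx', mul_add, Finset.sum_add_distrib]
  -- The two halves of the Leibniz rule agree because `c` is symmetric.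
  have hswap : ∑ i, ∑ j, 1 / 2 * c i j * (d1 n i σ x x' * d1 n j (d2 n l σ) x x') =
      ∑ i, ∑ j, 1 / 2 * c i j * (d1 n i (d2 n l σ) x x' * d1 n j σ x x') := by
    rw [Finset.sum_comm]
    refine Finset.sum_congr rfl fun i _ => Finset.sum_congr rfl fun j _ => ?_
    rw [hc j i]
    ring
  rw [hswap, ← Finset.sum_add_distrib]
  refine Finset.sum_congr rfl fun i _ => ?_
  rw [← Finset.sum_add_distrib]
  refine Finset.sum_congr rfl fun j _ => ?_
  ring

/-- The second `x'`-derivative of the Hamilton–Jacobi equation. -/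
theorem hamiltonJacobi_d2_d2 {n : ℕ} {U : Set (Fin n → ℝ)} (hU : IsOpen U)
    {σ : (Fin n → ℝ) → (Fin n → ℝ) → ℝ} (hσ : TwoPointSmooth U σ)
    {x : Fin n → ℝ} (hx : x ∈ U) (c : Fin n → Fin n → ℝ) (hc : ∀ i j, c i j = c j i)
    (hHJ : ∀ y ∈ U, σ x y = (1 / 2) * ∑ i, ∑ j, c i j * d1 n i σ x y * d1 n j σ x y)
    (k l : Fin n) {x' : Fin n → ℝ} (hx' : x' ∈ U) :
    d2 n k (d2 n l σ) x x' = ∑ i, ∑ j, c i j *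
      (d1 n i (d2 n k (d2 n l σ)) x x' * d1 n j σ x x' +
        d1 n i (d2 n l σ) x x' * d1 n j (d2 n k σ) x x') := by
  rw [d2_bilinear hU c (fun i => (hσ.smooth_d2 hU l).smooth_d1 hU i) (fun j => hσ.smooth_d1 hU j)
    hx hx' (fun y hy => hamiltonJacobi_d2 hU hσ hx c hc hHJ l hy) k]
  simp only [d1_d2_comm hU hσ _ _ hx hx', d1_d2_comm hU (hσ.smooth_d2 hU l) _ _ hx hx']

/-- The linear algebra of the argument: `s` and `t` are the gradients `σ_{,j}` and `σ_{,q'}`, `S`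
is the Hessian `σ_{,k'l'}`, `T p k l` is `σ_{,k'l'p}`, and `M` is the mixed Hessian. -/
theorem metric_of_relations {n : ℕ} (c M S : Matrix (Fin n) (Fin n) ℝ) (hM : IsUnit M.det)
    (hc : ∀ i j, c i j = c j i) (s t : Fin n → ℝ) (T : Fin n → Fin n → Fin n → ℝ)
    (h1 : ∀ l, t l = ∑ i, ∑ j, c i j * M i l * s j)
    (h2 : ∀ k l, S k l = ∑ i, ∑ j, c i j * (T i k l * s j + M i l * M j k)) (i j : Fin n) :
    c i j = ∑ k, ∑ l, M⁻¹ k i * M⁻¹ l j *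
      (S k l - ∑ p, ∑ q, t q * M⁻¹ q p * T p k l) := by
  have ht : t = Matrix.vecMul (Matrix.mulVec c s) M := by
    ext l
    rw [h1 l]
    simp only [Matrix.vecMul, Matrix.mulVec, dotProduct, Finset.sum_mul]
    exact Finset.sum_congr rfl fun i _ => Finset.sum_congr rfl fun j _ => by ring
  have htγ : Matrix.vecMul t M⁻¹ = Matrix.mulVec c s := by
    rw [ht, Matrix.vecMul_vecMul, Matrix.mul_nonsing_inv _ hM, Matrix.vecMul_one]
  have hV : ∀ k l, ∑ p, ∑ q, t q * M⁻¹ q p * T p k l =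
      ∑ p, ∑ r, c p r * (T p k l * s r) := by
    intro k l
    refine Finset.sum_congr rfl fun p _ => ?_
    have := congrFun htγ p
    simp only [Matrix.vecMul, Matrix.mulVec, dotProduct] at this
    rw [← Finset.sum_mul, this, Finset.sum_mul]
    exact Finset.sum_congr rfl fun r _ => by ring
  have hY : ∀ k l, S k l - ∑ p, ∑ q, t q * M⁻¹ q p * T p k l =
      (M.transpose * c * M) k l := by
    intro k l
    rw [h2, hV]
    simp only [mul_add, Finset.sum_add_distrib, add_sub_cancel_left, Matrix.mul_apply,
      Matrix.transpose_apply, Finset.sum_mul]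
    refine Finset.sum_congr rfl fun a _ => Finset.sum_congr rfl fun b _ => ?_
    rw [hc a b]
    ring
  simp only [hY]
  have hconj : M⁻¹.transpose * (M.transpose * c * M) * M⁻¹ = c := by
    have h3 : M⁻¹.transpose * M.transpose = 1 := by
      rw [← Matrix.transpose_mul, Matrix.mul_nonsing_inv _ hM, Matrix.transpose_one]
    calc M⁻¹.transpose * (M.transpose * c * M) * M⁻¹
        = (M⁻¹.transpose * M.transpose) * c * (M * M⁻¹) := by simp only [Matrix.mul_assoc]
      _ = c := by rw [h3, Matrix.mul_nonsing_inv _ hM, Matrix.one_mul, Matrix.mul_one]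
  conv_lhs => rw [← hconj]
  rw [Matrix.mul_apply]
  simp only [Matrix.mul_apply (M := M⁻¹.transpose), Matrix.transpose_apply M⁻¹, Finset.sum_mul]
  rw [Finset.sum_comm]
  exact Finset.sum_congr rfl fun k _ => Finset.sum_congr rfl fun l _ => by ring

/-- The metric is uniquely determined by the partial derivatives of the Ruse–Synge
function: `g^{ij}(x) = γ^{ik'} γ^{jl'} Y_{k'l'}`, where
`Y_{k'l'} = σ_{,k'l'} − V_{k'l'}`, `V_{k'l'} = σ_{,j'} γ^{ij'} σ_{,k'l'i}`, and `γ` is the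
inverse of the matrix of mixed second derivatives `σ_{,ij'}`. -/
theorem metric_determined_by_ruseSynge (n : ℕ) (hn : 1 ≤ n)
    (U : Set (Fin n → ℝ)) (hU : IsOpen U)
    (g : Fin n → Fin n → (Fin n → ℝ) → ℝ)
    (hgsmooth : ∀ i j, ContDiffOn ℝ (⊤ : ℕ∞) (g i j) U)
    (hgsymm : ∀ i j, ∀ x ∈ U, g i j x = g j i x)
    (σ : (Fin n → ℝ) → (Fin n → ℝ) → ℝ)
    (hσ : ContDiffOn ℝ (⊤ : ℕ∞) (fun p : (Fin n → ℝ) × (Fin n → ℝ) => σ p.1 p.2) (U ×ˢ U))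
    (hHJ : ∀ x ∈ U, ∀ x' ∈ U,
      σ x x' = (1 / 2) * ∑ i, ∑ j, g i j x * d1 n i σ x x' * d1 n j σ x x')
    (x x' : Fin n → ℝ) (hx : x ∈ U) (hx' : x' ∈ U)
    (hinv : IsUnit (mixedHess n σ x x').det) :
    ∀ i j : Fin n,
      g i j x = ∑ k, ∑ l, (mixedHess n σ x x')⁻¹ k i * (mixedHess n σ x x')⁻¹ l j *
        (d2 n k (d2 n l σ) x x' -
          ∑ p, ∑ q, d2 n q σ x x' * (mixedHess n σ x x')⁻¹ q p *
            d1 n p (d2 n k (d2 n l σ)) x x') := by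
  have hHJx := hHJ x hx
  have hc : ∀ i j, g i j x = g j i x := fun i j => hgsymm i j x hx
  exact metric_of_relations (Matrix.of fun i j => g i j x) (mixedHess n σ x x')
    (Matrix.of fun k l => d2 n k (d2 n l σ) x x') hinv hc (fun j => d1 n j σ x x')
    (fun q => d2 n q σ x x') (fun p k l => d1 n p (d2 n k (d2 n l σ)) x x')
    (fun l => hamiltonJacobi_d2 hU hσ hx (fun i j => g i j x) hc hHJx l hx')
    (fun k l => hamiltonJacobi_d2_d2 hU hσ hx (fun i j => g i j x) hc hHJx k l hx')
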